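/- For every ν ∈ [0,1] ∖ {√3/2} one has c₂(ν) ≥ 0. -/

import Mathlib

/-- Υ_ν := √(1 − ν²). -/
noncomputable def Ups (ν : ℝ) : ℝ := Real.sqrt (1 - ν ^ 2)

/-- w_ν := Υ_ν · cot(π Υ_ν / 2) for ν ∈ [0,1), with w_1 := 2/π (continuous extension). -/
noncomputable def w (ν : ℝ) : ℝ :=
  if ν = 1 then 2 / Real.pi else Ups ν * Real.cot (Real.pi * Ups ν / 2)

/-- η_ν := (√(9+4ν²) − 4ν)/(3(1 − 2 w_ν)) for ν ≠ √3/2, and η_{√3/2} := 1/(√3 (π−2)). -/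
noncomputable def eta (ν : ℝ) : ℝ :=
  if ν = Real.sqrt 3 / 2 then 1 / (Real.sqrt 3 * (Real.pi - 2))
  else (Real.sqrt (9 + 4 * ν ^ 2) - 4 * ν) / (3 * (1 - 2 * w ν))

/-- c₂(ν) as in the paper. -/
noncomputable def c2 (ν : ℝ) : ℝ :=
  (16 * ν * Real.sqrt (9 + 4 * ν ^ 2) / 9) *
    (72 * (5 + 2 * ν ^ 2) - 1764 * ν / Real.sqrt (9 + 4 * ν ^ 2)
      + (Real.sqrt (9 + 4 * ν ^ 2) - 4 * ν) ^ 2 *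
        (-4 + 9 * Real.pi ^ 2 * (Real.pi - 4) ^ 2 / (4 * (Real.pi - 2) ^ 2)
          - (3 * Real.pi * (4 - Real.pi) / (2 * (Real.pi - 2))
              + 3 * (Real.pi - 2) / (1 - 2 * w ν)) ^ 2))

theorem pow_bounds (p : ℝ) (h1 : 3.14159 < p) (h2 : p < 3.1416) :
    (9.86958 < p^2 ∧ p^2 < 9.86966) ∧ (31.0061 < p^3 ∧ p^3 < 31.0065) ∧
      (97.4087 < p^4 ∧ p^4 < 97.4102) := by
  have a1 : (3.14159:ℝ)^2 < p^2 := by gcongr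
  have a2 : p^2 < (3.1416:ℝ)^2 := by gcongr
  have b1 : (3.14159:ℝ)^3 < p^3 := by gcongr
  have b2 : p^3 < (3.1416:ℝ)^3 := by gcongr
  have c1 : (3.14159:ℝ)^4 < p^4 := by gcongr
  have c2 : p^4 < (3.1416:ℝ)^4 := by gcongr
  norm_num at *
  refine ⟨⟨?_, ?_⟩, ⟨?_, ?_⟩, ⟨?_, ?_⟩⟩ <;> linarith

theorem G_nonneg (p y : ℝ) (h1 : 3.14159 < p) (h2 : p < 3.1416) (ha : (3/2) ≤ y) (hb : y ≤ (7/2)) :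
    0 ≤ 2 * (4*y^2 - 31*y + 63) * (3*y-1)^2 * ((p-2)*y + 3/16*(2+p-p^2/2)*(3-y)*(3*y-1))^2
      - 12 * (p*(4-p)) * (3-y) * (3*y-1) * (y+1) * y * ((p-2)*y + 3/16*(2+p-p^2/2)*(3-y)*(3*y-1))
      - 64 * (p-2)^2 * y^3 * (y+1) := by
  obtain ⟨⟨q1, q2⟩, ⟨q3, q4⟩, ⟨q5, q6⟩⟩ := pow_bounds p h1 h2
  have hs : 0 ≤ y - (3/2) := by linarith
  have ht : 0 ≤ (7/2) - y := by linarith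
  have k0 : 0 ≤ (-680661/65536) + (-30357/65536) * p + (2473749/262144) * p^2 + (-866187/262144) * p^3 + (255339/1048576) * p^4 := by linarith
  have k1 : 0 ≤ (-4062813/32768) + (-919965/32768) * p + (16360221/131072) * p^2 + (-5228739/131072) * p^3 + (1368675/524288) * p^4 := by linarith
  have k2 : 0 ≤ (-39504551/65536) + (-18232039/65536) * p + (170242663/262144) * p^2 + (-47137017/262144) * p^3 + (9134361/1048576) * p^4 := by linarith
  have k3 : 0 ≤ (-24576479/16384) + (-19090591/16384) * p + (110282527/65536) * p^2 + (-23762433/65536) * p^3 + (964449/262144) * p^4 := by linarith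
  have k4 : 0 ≤ (-126312531/65536) + (-156395667/65536) * p + (586901523/262144) * p^2 + (-73898829/262144) * p^3 + (-33727635/1048576) * p^4 := by linarith
  have k5 : 0 ≤ (-34406677/32768) + (-73931861/32768) * p + (180819413/131072) * p^2 + (725493/131072) * p^3 + (-27447381/524288) * p^4 := by linarith
  have k6 : 0 ≤ (-2775185/65536) + (-45435985/65536) * p + (69899473/262144) * p^2 + (11873841/262144) * p^3 + (-17989713/1048576) * p^4 := by linarith
  have key : 0 ≤ (y - 3)^2 * (((-680661/65536) + (-30357/65536) * p + (2473749/262144) * p^2 + (-866187/262144) * p^3 + (255339/1048576) * p^4) * ((y - (3/2))^0 * ((7/2) - y)^6)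
      + ((-4062813/32768) + (-919965/32768) * p + (16360221/131072) * p^2 + (-5228739/131072) * p^3 + (1368675/524288) * p^4) * ((y - (3/2))^1 * ((7/2) - y)^5)
      + ((-39504551/65536) + (-18232039/65536) * p + (170242663/262144) * p^2 + (-47137017/262144) * p^3 + (9134361/1048576) * p^4) * ((y - (3/2))^2 * ((7/2) - y)^4)
      + ((-24576479/16384) + (-19090591/16384) * p + (110282527/65536) * p^2 + (-23762433/65536) * p^3 + (964449/262144) * p^4) * ((y - (3/2))^3 * ((7/2) - y)^3)
      + ((-126312531/65536) + (-156395667/65536) * p + (586901523/262144) * p^2 + (-73898829/262144) * p^3 + (-33727635/1048576) * p^4) * ((y - (3/2))^4 * ((7/2) - y)^2)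
      + ((-34406677/32768) + (-73931861/32768) * p + (180819413/131072) * p^2 + (725493/131072) * p^3 + (-27447381/524288) * p^4) * ((y - (3/2))^5 * ((7/2) - y)^1)
      + ((-2775185/65536) + (-45435985/65536) * p + (69899473/262144) * p^2 + (11873841/262144) * p^3 + (-17989713/1048576) * p^4) * ((y - (3/2))^6 * ((7/2) - y)^0)) := by positivity
  refine le_of_le_of_eq key ?_
  ring

theorem H_nonneg (p y : ℝ) (h1 : 3.14159 < p) (h2 : p < 3.1416) (ha : 1 ≤ y) (hb : y ≤ (3/2)) :
    0 ≤ 2 * (4*y^2 - 31*y + 63) * (y - 9/32*p*(y-1)^2)^2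
      - 9/4 * (p*(4-p)) * (3-y)^2 * (y - 9/32*p*(y-1)^2) * (y+1)
      - 9/4 * (p-2)^2 * (3-y)^2 * y * (y+1) := by
  obtain ⟨⟨q1, q2⟩, ⟨q3, q4⟩, ⟨q5, q6⟩⟩ := pow_bounds p h1 h2
  have hs : 0 ≤ y - 1 := by linarith
  have ht : 0 ≤ (3/2) - y := by linarith
  have hf : 0 ≤ y - 1 := by linarith
  have k0 : 0 ≤ (1984) := by linarith
  have k1 : 0 ≤ (10592) + (-648) * p + (324) * p^2 + (-81) * p^3 := by linarith
  have k2 : 0 ≤ (22360) + (-2709) * p + (1215) * p^2 + (-1215/4) * p^3 := by linarith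
  have k3 : 0 ≤ (23364) + (-8307/2) * p + (54513/32) * p^2 + (-6723/16) * p^3 := by linarith
  have k4 : 0 ≤ (12096) + (-2781) * p + (270297/256) * p^2 + (-16281/64) * p^3 := by linarith
  have k5 : 0 ≤ (2484) + (-1377/2) * p + (62451/256) * p^2 + (-3645/64) * p^3 := by linarith
  have key : 0 ≤ (y - 1) * (((1984)) * ((y - 1)^0 * ((3/2) - y)^5)
      + ((10592) + (-648) * p + (324) * p^2 + (-81) * p^3) * ((y - 1)^1 * ((3/2) - y)^4)
      + ((22360) + (-2709) * p + (1215) * p^2 + (-1215/4) * p^3) * ((y - 1)^2 * ((3/2) - y)^3)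
      + ((23364) + (-8307/2) * p + (54513/32) * p^2 + (-6723/16) * p^3) * ((y - 1)^3 * ((3/2) - y)^2)
      + ((12096) + (-2781) * p + (270297/256) * p^2 + (-16281/64) * p^3) * ((y - 1)^4 * ((3/2) - y)^1)
      + ((2484) + (-1377/2) * p + (62451/256) * p^2 + (-3645/64) * p^3) * ((y - 1)^5 * ((3/2) - y)^0)) := by positivity
  refine le_of_le_of_eq key ?_
  ring

/-- derivative of the comparison function -/
theorem w_small_le (u : ℝ) (h1 : 1/2 ≤ u) (h2 : u ≤ 1) :
    u * Real.cot (Real.pi * u / 2) ≤ Real.pi / 4 * (1 - u^2) := by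
  have hp1 := Real.pi_gt_d6
  have hp2 := Real.pi_lt_d6
  have hpp : Real.pi^2 ≤ 10 := by nlinarith
  have hu : 0 < u := by linarith
  have hd : ∀ v ∈ Set.Ioo (1/2:ℝ) 1, HasDerivAt
      (fun v : ℝ => Real.arctan (Real.pi/4*(1-v^2)/v) + Real.pi * v / 2)
      (1/(1+(Real.pi/4*(1-v^2)/v)^2) * ((Real.pi/4*(-(2*v))*v - Real.pi/4*(1-v^2)*1)/v^2)
        + Real.pi/2) v := by
    intro v hv
    have hv0 : v ≠ 0 := by have := hv.1; intro h; rw [h] at this; norm_num at this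
    have e1 : HasDerivAt (fun v : ℝ => Real.pi/4*(1-v^2)) (Real.pi/4*(-(2*v))) v := by
      have := ((hasDerivAt_pow 2 v).const_sub 1).const_mul (Real.pi/4)
      simpa using this
    have e2 := (e1.div (hasDerivAt_id v) hv0).arctan
    have e3 := ((hasDerivAt_id v).const_mul Real.pi).div_const 2
    refine (e2.add e3).congr_deriv ?_
    simp
  have hcont : ContinuousOn
      (fun v : ℝ => Real.arctan (Real.pi/4*(1-v^2)/v) + Real.pi * v / 2) (Set.Icc (1/2:ℝ) 1) := by
    refine ContinuousOn.add ?_ (by fun_prop)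
    refine Real.continuous_arctan.comp_continuousOn ?_
    refine ContinuousOn.div (by fun_prop) (by fun_prop) ?_
    intro v hv h; have := hv.1; rw [h] at this; norm_num at this
  have hanti : AntitoneOn
      (fun v : ℝ => Real.arctan (Real.pi/4*(1-v^2)/v) + Real.pi * v / 2) (Set.Icc (1/2:ℝ) 1) := by
    refine antitoneOn_of_deriv_nonpos (convex_Icc _ _) hcont ?_ ?_
    · intro v hv
      rw [interior_Icc] at hv
      exact (hd v hv).differentiableAt.differentiableWithinAt
    · intro v hv
      rw [interior_Icc] at hv
      rw [(hd v hv).deriv]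
      have hv0 : 0 < v := by linarith [hv.1]
      have hv1 : 1/4 ≤ v^2 := by nlinarith [hv.1]
      have hv2 : v^2 ≤ 1 := by nlinarith [hv.2]
      have e : 1/(1+(Real.pi/4*(1-v^2)/v)^2) * ((Real.pi/4*(-(2*v))*v - Real.pi/4*(1-v^2)*1)/v^2)
          = - (Real.pi/4*(1+v^2)) / (v^2 + (Real.pi/4*(1-v^2))^2) := by
        field_simp
        ring
      rw [e]
      have hpos : 0 < v^2 + (Real.pi/4*(1-v^2))^2 := by positivity
      rw [neg_div]
      have : Real.pi/2 ≤ (Real.pi/4*(1+v^2)) / (v^2 + (Real.pi/4*(1-v^2))^2) := by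
        rw [le_div_iff₀ hpos]
        have : 2 * (v^2 + (Real.pi/4*(1-v^2))^2) ≤ 1 + v^2 := by
          have : Real.pi^2 * (1-v^2) ≤ 8 := by nlinarith
          nlinarith
        nlinarith
      linarith
  have hle := hanti (⟨h1, h2⟩ : u ∈ Set.Icc (1/2:ℝ) 1) (⟨by norm_num, le_refl _⟩) h2
  simp only [one_pow, sub_self, mul_zero, zero_div, Real.arctan_zero, zero_add, mul_one] at hle
  have hcot : Real.cot (Real.pi * u / 2) = Real.tan (Real.pi/2 - Real.pi*u/2) := by
    rw [Real.tan_pi_div_two_sub, Real.cot_eq_cos_div_sin, Real.tan_eq_sin_div_cos, inv_div]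
  have htan : Real.tan (Real.pi/2 - Real.pi*u/2) ≤ Real.pi/4*(1-u^2)/u := by
    rw [← Real.tan_arctan (Real.pi/4*(1-u^2)/u)]
    refine Real.strictMonoOn_tan.monotoneOn ?_ (Real.arctan_mem_Ioo _) (by linarith)
    constructor <;> nlinarith
  rw [hcot]
  calc _ ≤ u * (Real.pi/4*(1-u^2)/u) := by gcongr
    _ = _ := by field_simp

/-- Second order Taylor polynomial of `w` in `x = u ^ 2` at `x = 1/4`. -/
noncomputable def TT (x : ℝ) : ℝ :=
  1/2 - (Real.pi-2)/2 * (x-1/4) - (2+Real.pi-Real.pi^2/2)/2*(x-1/4)^2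

/-- residual -/
noncomputable def QQ (x : ℝ) : ℝ :=
  Real.pi/2*(((Real.pi-2)/2)^2 - (2+Real.pi-Real.pi^2/2)/2) - 3*((2+Real.pi-Real.pi^2/2)/2)
   + Real.pi * ((Real.pi-2)/2) * ((2+Real.pi-Real.pi^2/2)/2) * (x-1/4)
   + Real.pi/2*((2+Real.pi-Real.pi^2/2)/2)^2*(x-1/4)^2

/-- comparison function -/
noncomputable def hh (u : ℝ) : ℝ := Real.pi * u / 2 - Real.arctan (u / TT (u^2))

theorem K1_bounds : 0.2067 < 2+Real.pi-Real.pi^2/2 ∧ 2+Real.pi-Real.pi^2/2 < 0.207 := by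
  have hp1 := Real.pi_gt_d6
  have hp2 := Real.pi_lt_d6
  constructor <;> nlinarith

theorem TT_pos (x : ℝ) (h0 : 0 ≤ x) (h1 : x ≤ 1) : 0 < TT x := by
  have hp1 := Real.pi_gt_d6
  have hp2 := Real.pi_lt_d6
  obtain ⟨k1, k2⟩ := K1_bounds
  unfold TT
  have : (x-1/4)^2 ≤ 9/16 := by nlinarith
  have h3 : (2+Real.pi-Real.pi^2/2)/2*(x-1/4)^2 ≤ 0.1035 * (9/16) := by
    apply mul_le_mul <;> first | positivity | linarith
  nlinarith

theorem QQ_mono (x z : ℝ) (h0 : 0 ≤ x) (h : x ≤ z) : QQ x ≤ QQ z := by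
  have hp1 := Real.pi_gt_d6
  have hp2 := Real.pi_lt_d6
  obtain ⟨k1, k2⟩ := K1_bounds
  have e : QQ z - QQ x = Real.pi * ((2+Real.pi-Real.pi^2/2)/2) * (z-x) *
     ((Real.pi-2)/2 + (2+Real.pi-Real.pi^2/2)/4 * (x+z-1/2)) := by unfold QQ; ring
  have : 0 ≤ QQ z - QQ x := by
    rw [e]
    apply mul_nonneg
    · apply mul_nonneg
      · apply mul_nonneg <;> linarith
      · linarith
    · nlinarith
  linarith

theorem QQ_quarter : 0 ≤ QQ (1/4) := by
  have hp1 := Real.pi_gt_d6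
  have hp2 := Real.pi_lt_d6
  obtain ⟨k1, k2⟩ := K1_bounds
  unfold QQ
  have h1 : 0.5707^2 ≤ ((Real.pi-2)/2)^2 := by gcongr; linarith
  nlinarith

theorem hh_deriv (u : ℝ) (h0 : 0 ≤ u) (h1 : u ≤ 1) :
    HasDerivAt hh ((u^2-1/4)^2 * QQ (u^2) / (TT (u^2)^2 + u^2)) u := by
  have hT := TT_pos (u^2) (by positivity) (by nlinarith)
  have e1 : HasDerivAt (fun v : ℝ => TT (v^2))
      (-((Real.pi-2)/2*(2*u)) - (2+Real.pi-Real.pi^2/2)/2*(2*(u^2-1/4)*(2*u))) u := by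
    unfold TT
    have a := (hasDerivAt_pow 2 u).sub_const (1/4)
    have b := (a.const_mul ((Real.pi-2)/2)).const_sub (1/2)
    have c := (a.pow 2).const_mul ((2+Real.pi-Real.pi^2/2)/2)
    have d := b.sub c
    refine d.congr_deriv ?_
    norm_num
  have e2 := ((hasDerivAt_id u).div e1 hT.ne').arctan
  have e3 := ((hasDerivAt_id u).const_mul Real.pi).div_const 2
  have e4 := e3.sub e2
  have : HasDerivAt hh _ u := e4
  convert this using 1
  simp only [id, Pi.div_apply]
  have hpos : 0 < TT (u^2)^2 + u^2 := by positivity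
  field_simp
  unfold TT QQ
  ring

theorem hh_half : hh (1/2) = 0 := by
  unfold hh
  have : (1/2:ℝ) / TT ((1/2)^2) = 1 := by unfold TT; norm_num
  rw [this, Real.arctan_one]; ring

theorem hh_zero : hh 0 = 0 := by
  unfold hh; simp

theorem hh_nonneg (u : ℝ) (h1 : 1/2 ≤ u) (h2 : u ≤ 1) : 0 ≤ hh u := by
  have hm : MonotoneOn hh (Set.Icc (1/2) 1) := by
    refine monotoneOn_of_deriv_nonneg (convex_Icc _ _) ?_ ?_ ?_
    · intro v hv
      exact (hh_deriv v (by linarith [hv.1]) hv.2).continuousAt.continuousWithinAt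
    · intro v hv
      rw [interior_Icc] at hv
      exact (hh_deriv v (by linarith [hv.1]) hv.2.le).differentiableAt.differentiableWithinAt
    · intro v hv
      rw [interior_Icc] at hv
      rw [(hh_deriv v (by linarith [hv.1]) hv.2.le).deriv]
      have := QQ_mono (1/4) (v^2) (by norm_num) (by nlinarith [hv.1])
      have := QQ_quarter
      have : 0 ≤ QQ (v^2) := by linarith
      positivity
  have := hm (⟨le_refl _, by norm_num⟩ : (1/2:ℝ) ∈ Set.Icc (1/2:ℝ) 1) ⟨h1, h2⟩ h1
  rwa [hh_half] at this

theorem hh_nonpos (u : ℝ) (h1 : 0 ≤ u) (h2 : u ≤ 1/2) : hh u ≤ 0 := by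
  rcases le_total 0 (QQ (u^2)) with hQ | hQ
  · have hm : MonotoneOn hh (Set.Icc u (1/2)) := by
      refine monotoneOn_of_deriv_nonneg (convex_Icc _ _) ?_ ?_ ?_
      · intro v hv
        exact (hh_deriv v (by linarith [hv.1]) (by linarith [hv.2])).continuousAt.continuousWithinAt
      · intro v hv
        rw [interior_Icc] at hv
        exact (hh_deriv v (by linarith [hv.1])
          (by linarith [hv.2])).differentiableAt.differentiableWithinAt
      · intro v hv
        rw [interior_Icc] at hv
        rw [(hh_deriv v (by linarith [hv.1]) (by linarith [hv.2])).deriv]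
        have := QQ_mono (u^2) (v^2) (by positivity) (by nlinarith [hv.1])
        have : 0 ≤ QQ (v^2) := by linarith
        positivity
    have := hm (⟨le_refl _, h2⟩ : u ∈ Set.Icc u (1/2)) ⟨h2, le_refl _⟩ h2
    rwa [hh_half] at this
  · have hm : AntitoneOn hh (Set.Icc 0 u) := by
      refine antitoneOn_of_deriv_nonpos (convex_Icc _ _) ?_ ?_ ?_
      · intro v hv
        exact (hh_deriv v (by linarith [hv.1]) (by linarith [hv.2])).continuousAt.continuousWithinAt
      · intro v hv
        rw [interior_Icc] at hv
        exact (hh_deriv v (by linarith [hv.1])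
          (by linarith [hv.2])).differentiableAt.differentiableWithinAt
      · intro v hv
        rw [interior_Icc] at hv
        rw [(hh_deriv v (by linarith [hv.1]) (by linarith [hv.2])).deriv]
        have := QQ_mono (v^2) (u^2) (by positivity) (by nlinarith [hv.1, hv.2])
        have : QQ (v^2) ≤ 0 := by linarith
        apply div_nonpos_of_nonpos_of_nonneg
        · exact mul_nonpos_of_nonneg_of_nonpos (by positivity) this
        · positivity
    have := hm (⟨le_refl _, h1⟩ : (0:ℝ) ∈ Set.Icc 0 u) ⟨h1, le_refl _⟩ h1
    rwa [hh_zero] at this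

theorem cot_inv_tan (t : ℝ) : Real.cot t = (Real.tan t)⁻¹ := by
  rw [Real.cot_eq_cos_div_sin, Real.tan_eq_sin_div_cos, inv_div]

theorem w_le_TT (u : ℝ) (h1 : 1/2 ≤ u) (h2 : u < 1) :
    u * Real.cot (Real.pi * u / 2) ≤ TT (u^2) := by
  have hT := TT_pos (u^2) (by positivity) (by nlinarith)
  have hh0 := hh_nonneg u h1 h2.le
  unfold hh at hh0
  have hp := Real.pi_pos
  have hu : 0 < u := by linarith
  have : u / TT (u^2) ≤ Real.tan (Real.pi*u/2) := by
    rw [← Real.tan_arctan (u / TT (u^2))]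
    refine Real.strictMonoOn_tan.monotoneOn (Real.arctan_mem_Ioo _) ?_ (by linarith)
    constructor <;> nlinarith
  rw [cot_inv_tan, ← div_eq_mul_inv]
  have h0 : 0 < u / TT (u^2) := by positivity
  rw [div_le_iff₀ (by linarith)]
  rwa [div_le_iff₀' hT] at this

theorem TT_le_w (u : ℝ) (h1 : 0 < u) (h2 : u ≤ 1/2) :
    TT (u^2) ≤ u * Real.cot (Real.pi * u / 2) := by
  have hT := TT_pos (u^2) (by positivity) (by nlinarith)
  have hh0 := hh_nonpos u h1.le h2
  unfold hh at hh0
  have hp := Real.pi_pos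
  have hm : Real.pi*u/2 ∈ Set.Ioo (-(Real.pi/2)) (Real.pi/2) := by
    constructor <;> nlinarith
  have : Real.tan (Real.pi*u/2) ≤ u / TT (u^2) := by
    rw [← Real.tan_arctan (u / TT (u^2))]
    exact Real.strictMonoOn_tan.monotoneOn hm (Real.arctan_mem_Ioo _) (by linarith)
  have h0 : 0 < Real.tan (Real.pi*u/2) :=
    Real.tan_pos_of_pos_of_lt_pi_div_two (by positivity) hm.2
  rw [cot_inv_tan, ← div_eq_mul_inv]
  rw [le_div_iff₀ h0]
  rwa [le_div_iff₀' hT] at this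

theorem bracket_eq (p r y ν S q : ℝ) (hr : 0 < r) (hy : y = r^2)
    (hν : ν = 3*(r^2-1)/(4*r)) (hS : S = 3*(r^2+1)/(2*r)) (hp : p - 2 ≠ 0) :
    72 * (5 + 2 * ν ^ 2) - 1764 * ν / S
      + (S - 4 * ν) ^ 2 * (-4 + 9 * p ^ 2 * (p - 4) ^ 2 / (4 * (p - 2) ^ 2)
          - (3 * p * (4 - p) / (2 * (p - 2)) + 3 * (p - 2) / q) ^ 2)
    = 9 * (2*(4*y^2-31*y+63)/(y+1) - p*(4-p)*(9/4*(3-y)^2/y)*q⁻¹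
        - (p-2)^2*(9/4*(3-y)^2/y)*(q⁻¹)^2) := by
  have e1 : 9 * p ^ 2 * (p - 4) ^ 2 / (4 * (p - 2) ^ 2)
      - (3 * p * (4 - p) / (2 * (p - 2)) + 3 * (p - 2) / q) ^ 2
      = - 9 * (p*(4-p)) * q⁻¹ - 9*(p-2)^2*(q⁻¹)^2 := by
    rw [div_eq_mul_inv _ q]
    generalize q⁻¹ = i
    field_simp
    ring
  have e2 : (S - 4*ν)^2 = 9/4*(3-y)^2/y := by
    rw [hy, hν, hS]; field_simp; ring
  have e3 : 1764 * ν / S = 882*(y-1)/(y+1) := by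
    rw [hy, hν, hS]; field_simp; ring
  have e4 : ν^2 = 9/16*(y-1)^2/y := by
    rw [hy, hν]; field_simp; ring
  rw [add_sub_assoc, e1, e2, e3, e4]
  have hy0 : 0 < y := by rw [hy]; positivity
  have hy1 : y + 1 ≠ 0 := by positivity
  generalize q⁻¹ = i
  field_simp
  ring

set_option maxHeartbeats 2000000

theorem caseA (p y K ρ : ℝ) (h1 : 3.14159 < p) (h2 : p < 3.1416) (ha : 3/2 ≤ y) (hb : y ≤ 7/2)
    (hK : K = (p-2) + (2+p-p^2/2)*(3/16*(3-y)*(3*y-1)/y)) (hK0 : 0 < K)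
    (hρ : 0 ≤ ρ) (hρK : ρ * K ≤ 1) :
    0 ≤ 2*(4*y^2-31*y+63)/(y+1) - 12*(p*(4-p))*(3-y)/(3*y-1)*ρ
      - 64*(p-2)^2*y/(3*y-1)^2*ρ^2 := by
  have hG := G_nonneg p y h1 h2 ha hb
  have hy : 0 < y := by linarith
  have h3 : 0 < 3*y-1 := by linarith
  have hKy : (p-2)*y + 3/16*(2+p-p^2/2)*(3-y)*(3*y-1) = y * K := by
    rw [hK]; field_simp
  rw [hKy] at hG
  obtain ⟨R, hR⟩ : ∃ R, R = K⁻¹ := ⟨_, rfl⟩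
  have hRK : R * K = 1 := by rw [hR]; field_simp
  have hR0 : 0 < R := by rw [hR]; positivity
  have hρR : ρ ≤ R := by
    by_contra hc
    push Not at hc
    nlinarith
  have hN : 0 ≤ 2*(4*y^2-31*y+63)*(3*y-1)^2 - 12*(p*(4-p))*(3-y)*(3*y-1)*(y+1)*R
      - 64*(p-2)^2*y*(y+1)*R^2 := by
    have : 0 ≤ (y⁻¹*R)^2 * (2 * (4*y^2 - 31*y + 63) * (3*y-1)^2 * (y*K)^2
      - 12 * (p*(4-p)) * (3-y) * (3*y-1) * (y+1) * y * (y*K)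
      - 64 * (p-2)^2 * y^3 * (y+1)) := mul_nonneg (by positivity) hG
    refine le_of_le_of_eq this ?_
    rw [hR]
    field_simp
  have hp4 : 0 ≤ p*(4-p) := by nlinarith
  have hp4' : p*(4-p) ≤ 2.7 := by nlinarith
  have hmon : 0 ≤ 12*(p*(4-p))*(3-y)*(3*y-1) + 64*(p-2)^2*y*(R+ρ) := by
    rcases le_total y 3 with hy3 | hy3
    · have : 0 ≤ 3 - y := by linarith
      positivity
    · have hKle : K ≤ p - 2 := by
        rw [hK]
        have : (2+p-p^2/2)*(3/16*(3-y)*(3*y-1)/y) ≤ 0 := by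
          apply mul_nonpos_of_nonneg_of_nonpos
          · nlinarith
          · apply div_nonpos_of_nonpos_of_nonneg _ hy.le
            nlinarith
        linarith
      have hpR : 1 ≤ (p-2)*R := by
        have := mul_le_mul_of_nonneg_left hKle hR0.le
        linarith
      have hA : 64*(p-2)^2*y*(R+ρ) ≥ 64*1.14*3 := by
        have a1 : (1.14:ℝ) ≤ (p-2)*((p-2)*R) := by
          have a0 : (1.14:ℝ) * 1 ≤ (p-2)*((p-2)*R) :=
            mul_le_mul (by linarith) hpR (by norm_num) (by linarith)
          linarith
        have a2 : (1.14:ℝ)*3 ≤ (p-2)*((p-2)*R)*y := by gcongr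
        have a3 : 0 ≤ 64*(p-2)^2*y*ρ := by positivity
        have a4 : 64*(p-2)^2*y*(R+ρ) = 64*((p-2)*((p-2)*R)*y) + 64*(p-2)^2*y*ρ := by ring
        rw [a4]
        linarith
      have hB : 12*(p*(4-p))*(3-y)*(3*y-1) ≥ - (12*2.7*(0.5*9.5)) := by
        have b1 : (y-3)*(3*y-1) ≤ 0.5*9.5 := by nlinarith
        have b0 : 0 ≤ (y-3)*(3*y-1) := by apply mul_nonneg <;> linarith
        have : (p*(4-p))*((y-3)*(3*y-1)) ≤ 2.7*(0.5*9.5) := by gcongr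
        linarith
      linarith
  have hfin : 0 ≤ 2*(4*y^2-31*y+63)*(3*y-1)^2 - 12*(p*(4-p))*(3-y)*(3*y-1)*(y+1)*ρ
      - 64*(p-2)^2*y*(y+1)*ρ^2 := by
    have : 0 ≤ (y+1)*(R-ρ)*(12*(p*(4-p))*(3-y)*(3*y-1) + 64*(p-2)^2*y*(R+ρ)) := by
      apply mul_nonneg (mul_nonneg _ _) hmon <;> linarith
    linarith
  have e : 2*(4*y^2-31*y+63)/(y+1) - 12*(p*(4-p))*(3-y)/(3*y-1)*ρ
      - 64*(p-2)^2*y/(3*y-1)^2*ρ^2 = (2*(4*y^2-31*y+63)*(3*y-1)^2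
      - 12*(p*(4-p))*(3-y)*(3*y-1)*(y+1)*ρ
      - 64*(p-2)^2*y*(y+1)*ρ^2) / ((y+1)*(3*y-1)^2) := by
    have : y + 1 ≠ 0 := by positivity
    have h3' : y * 3 - 1 ≠ 0 := by intro h; linarith
    field_simp
  rw [e]
  positivity

theorem caseB (p y i : ℝ) (h1 : 3.14159 < p) (h2 : p < 3.1416) (ha : 1 ≤ y) (hb : y ≤ 3/2)
    (hi : 0 ≤ i) (hiq : i * (1 - 9/32*p*(y-1)^2/y) ≤ 1) :
    0 ≤ 2*(4*y^2-31*y+63)/(y+1) - p*(4-p)*(9/4*(3-y)^2/y)*i - (p-2)^2*(9/4*(3-y)^2/y)*i^2 := by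
  have hH := H_nonneg p y h1 h2 ha hb
  have hy : 0 < y := by linarith
  obtain ⟨k, hk⟩ : ∃ k, k = y - 9/32*p*(y-1)^2 := ⟨_, rfl⟩
  have hk0 : 0 < k := by rw [hk]; nlinarith [mul_nonneg (sub_nonneg.2 ha) (sub_nonneg.2 hb)]
  rw [← hk] at hH
  have hik : i * k ≤ y := by
    have : i * (1 - 9/32*p*(y-1)^2/y) = i * k / y := by rw [hk]; field_simp
    rw [this, div_le_one hy] at hiq
    exact hiq
  have hile : i ≤ y / k := by rwa [le_div_iff₀ hk0]
  have hp4 : 0 ≤ p*(4-p) := by nlinarith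
  have a : p*(4-p)*(9/4*(3-y)^2/y)*i ≤ p*(4-p)*(9/4*(3-y)^2/y)*(y/k) := by gcongr
  have b : (p-2)^2*(9/4*(3-y)^2/y)*i^2 ≤ (p-2)^2*(9/4*(3-y)^2/y)*(y/k)^2 := by gcongr
  have e : 2*(4*y^2-31*y+63)/(y+1) - p*(4-p)*(9/4*(3-y)^2/y)*(y/k)
      - (p-2)^2*(9/4*(3-y)^2/y)*(y/k)^2 = (2 * (4*y^2 - 31*y + 63) * k^2
      - 9/4 * (p*(4-p)) * (3-y)^2 * k * (y+1)
      - 9/4 * (p-2)^2 * (3-y)^2 * y * (y+1)) / ((y+1)*k^2) := by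
    have : y + 1 ≠ 0 := by positivity
    field_simp
  have : 0 ≤ 2*(4*y^2-31*y+63)/(y+1) - p*(4-p)*(9/4*(3-y)^2/y)*(y/k)
      - (p-2)^2*(9/4*(3-y)^2/y)*(y/k)^2 := by
    rw [e]; positivity
  linarith

theorem TT_zero_le : TT 0 ≤ 2 / Real.pi := by
  have hp1 := Real.pi_gt_d6
  have hp2 := Real.pi_lt_d6
  rw [le_div_iff₀ Real.pi_pos]
  unfold TT
  obtain ⟨k1, k2⟩ := K1_bounds
  have : 1 / 2 - (Real.pi - 2) / 2 * (0 - 1 / 4) - (2 + Real.pi - Real.pi ^ 2 / 2) / 2 * (0 - 1 / 4) ^ 2 ≤ 0.63645 := by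
    linarith
  nlinarith

/-- For every ν ∈ [0,1] ∖ {√3/2} one has c₂(ν) ≥ 0. -/
theorem c2_nonneg (ν : ℝ) (hν : ν ∈ Set.Icc (0 : ℝ) 1) (h : ν ≠ Real.sqrt 3 / 2) :
    0 ≤ c2 ν := by
  obtain ⟨hν0, hν1⟩ := hν
  rcases hν0.eq_or_lt with h0 | hpos
  · rw [← h0]; simp [c2]
  have hp1 : 3.14159 < Real.pi := by linarith [Real.pi_gt_d6]
  have hp2 : Real.pi < 3.1416 := by linarith [Real.pi_lt_d6]
  obtain ⟨k1, k2⟩ := K1_bounds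
  unfold c2
  obtain ⟨S, hS⟩ : ∃ S, S = Real.sqrt (9 + 4 * ν ^ 2) := ⟨_, rfl⟩
  have hS2 : S^2 = 9 + 4*ν^2 := by rw [hS]; exact Real.sq_sqrt (by positivity)
  have hS0 : 0 ≤ S := by rw [hS]; positivity
  rw [← hS]
  have hS3 : 3 ≤ S := by nlinarith
  have hS4 : S ≤ 3.606 := by nlinarith
  obtain ⟨r, hr⟩ : ∃ r, r = (S + 2*ν)/3 := ⟨_, rfl⟩
  have hr0 : 0 < r := by rw [hr]; positivity
  have hνr : ν = 3*(r^2-1)/(4*r) := by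
    rw [eq_div_iff (by positivity), hr]; linarith
  have hSr : S = 3*(r^2+1)/(2*r) := by
    rw [eq_div_iff (by positivity), hr]; linarith
  obtain ⟨y, hy⟩ : ∃ y, y = r^2 := ⟨_, rfl⟩
  have hr1 : 1 ≤ r := by linarith
  have hr2 : r ≤ 1.869 := by linarith
  have hy1 : 1 ≤ y := by nlinarith
  have hy2 : y ≤ 7/2 := by nlinarith
  have hy0 : 0 < y := by linarith
  have hν2 : ν^2 = 9/16*(y-1)^2/y := by
    rw [hy, hνr]; field_simp; ring
  rw [bracket_eq Real.pi r y ν S (1 - 2 * w ν) hr0 hy hνr hSr (by linarith)]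
  refine mul_nonneg (by positivity) (mul_nonneg (by norm_num) ?_)
  obtain ⟨u, hu⟩ : ∃ u, u = Ups ν := ⟨_, rfl⟩
  have hu0 : 0 ≤ u := by rw [hu]; exact Real.sqrt_nonneg _
  have hu2 : u^2 = 1 - ν^2 := by rw [hu]; exact Real.sq_sqrt (by nlinarith)
  have hu1 : u < 1 := by nlinarith
  rcases le_total y (3/2) with hc | hc
  · have hνs : ν^2 ≤ 0.15 := by
      rw [hν2, div_le_iff₀ hy0]; nlinarith
    have hw : w ν ≤ Real.pi / 4 * ν^2 := by
      have hne : ν ≠ 1 := by intro h; rw [h] at hνs; norm_num at hνs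
      unfold w
      rw [if_neg hne, ← hu]
      have := w_small_le u (by nlinarith) hu1.le
      rw [hu2] at this
      linarith
    have hq : 1 - 9/32*Real.pi*(y-1)^2/y ≤ 1 - 2 * w ν := by
      have : 9/32*Real.pi*(y-1)^2/y = Real.pi/2*ν^2 := by rw [hν2]; ring
      rw [this]; linarith
    have hq0 : 0 < 1 - 2 * w ν := by nlinarith
    apply caseB Real.pi y _ hp1 hp2 hy1 hc (by positivity)
    rw [inv_mul_le_iff₀ hq0]
    linarith
  · obtain ⟨d, hd⟩ : ∃ d, d = u^2 - 1/4 := ⟨_, rfl⟩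
    have hdy : 3/16*(3-y)*(3*y-1)/y = d := by
      rw [hd, hu2, hν2]; field_simp; ring
    have hd0 : d ≠ 0 := by
      intro hd0
      apply h
      have : ν^2 = 3/4 := by linarith
      have h3 : Real.sqrt 3 ^ 2 = 3 := Real.sq_sqrt (by norm_num)
      have h3' := Real.sqrt_nonneg 3
      have : (ν - Real.sqrt 3 / 2) * (ν + Real.sqrt 3/2) = 0 := by
        linear_combination this - h3 / 4
      rcases mul_eq_zero.1 this with h | h <;> linarith
    obtain ⟨K, hK⟩ : ∃ K, K = (Real.pi-2) + (2+Real.pi-Real.pi^2/2)*d := ⟨_, rfl⟩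
    have hK0 : 0 < K := by
      have : -1/4 ≤ d := by nlinarith
      rw [hK]; nlinarith
    have hTT : 1 - 2 * TT (u^2) = d * K := by
      rw [hK, hd]; unfold TT; ring
    have key : 0 ≤ d * (1 - 2 * w ν)⁻¹ ∧ d * (1 - 2 * w ν)⁻¹ * K ≤ 1 := by
      rcases lt_or_gt_of_ne hd0 with hneg | hpos'
      · have hw : TT (u^2) ≤ w ν := by
          unfold w
          split_ifs with h1
          · have : u^2 = 0 := by rw [hu2, h1]; norm_num
            rw [this]; exact TT_zero_le
          · rw [← hu]
            have hν1' : ν < 1 := lt_of_le_of_ne hν1 h1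
            exact TT_le_w u (by
              rcases hu0.eq_or_lt with h | h
              · rw [← h] at hu2; nlinarith
              · exact h) (by nlinarith)
        have hq : 1 - 2 * w ν ≤ d * K := by linarith
        have hdK : d * K < 0 := mul_neg_of_neg_of_pos hneg hK0
        have hq0 : 1 - 2 * w ν < 0 := by linarith
        constructor
        · exact mul_nonneg_of_nonpos_of_nonpos hneg.le (inv_nonpos.2 hq0.le)
        · have : d * (1 - 2 * w ν)⁻¹ * K = d * K / (1 - 2 * w ν) := by ring
          rw [this, div_le_one_of_neg hq0]
          exact hq
      · have hw : w ν ≤ TT (u^2) := by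
          unfold w
          rw [if_neg (by intro h1; rw [h1] at hu2; nlinarith), ← hu]
          exact w_le_TT u (by nlinarith) hu1
        have hq : d * K ≤ 1 - 2 * w ν := by linarith
        have hdK : 0 < d * K := by positivity
        have hq0 : 0 < 1 - 2 * w ν := by linarith
        constructor
        · positivity
        · have : d * (1 - 2 * w ν)⁻¹ * K = d * K / (1 - 2 * w ν) := by ring
          rw [this, div_le_one hq0]
          exact hq
    have hA := caseA Real.pi y K (d * (1 - 2 * w ν)⁻¹) hp1 hp2 hc hy2 (by rw [hdy]; exact hK) hK0
      key.1 key.2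
    refine le_of_le_of_eq hA ?_
    rw [← hdy]
    generalize (1 - 2 * w ν)⁻¹ = i
    have h31 : 3*y-1 ≠ 0 := by intro h; linarith
    have h31' : y*3-1 ≠ 0 := by intro h; linarith
    have : y + 1 ≠ 0 := by positivity
    field_simp
    ring
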